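/- arXiv:1406.1821 — 5 statements merged into one kernel-verified Lean document; each statement's English description precedes it below -/
import Mathlib

section
/- Let f, g : ℂ → ℂ and z ∈ ℂ. Suppose f is complex analytic at z with deriv f z ≠ 0, and g is complex analytic at f(z) with deriv g (f z) ≠ 0. Then the Schwarzian derivative satisfies the cocycle rule S(g ∘ f)(z) = Sg(f(z)) · (deriv f z)^2 + Sf(z). -/
/-!
The chain rule `(g ∘ f)' = (g' ∘ f) · f'` holds on a whole neighbourhood of `z`, because analyticity
is an open condition, so it may be differentiated twice more. This gives
`(g ∘ f)'' = (g'' ∘ f) · f'² + (g' ∘ f) · f''` near `z` and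
`(g ∘ f)''' = (g''' ∘ f) · f'³ + 3 (g'' ∘ f) · f' · f'' + (g' ∘ f) · f'''` at `z`.
In the Schwarzian of `g ∘ f` the mixed terms `3 (g''/g') f''` cancel, which leaves the cocycle rule.
-/

/-- The Schwarzian derivative of `f` at `z`:
`Sf(z) = f'''(z)/f'(z) − (3/2)·(f''(z)/f'(z))²`. -/
noncomputable def schwarzian (f : ℂ → ℂ) (z : ℂ) : ℂ :=
  deriv (deriv (deriv f)) z / deriv f z - (3 / 2) * (deriv (deriv f) z / deriv f z) ^ 2

/-- Cocycle rule for the Schwarzian derivative: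
`S(g ∘ f)(z) = Sg(f(z)) · (f'(z))² + Sf(z)`. -/
theorem schwarzian_comp (f g : ℂ → ℂ) (z : ℂ)
    (hf : AnalyticAt ℂ f z) (hf' : deriv f z ≠ 0)
    (hg : AnalyticAt ℂ g (f z)) (hg' : deriv g (f z) ≠ 0) :
    schwarzian (g ∘ f) z = schwarzian g (f z) * (deriv f z) ^ 2 + schwarzian f z := by
  have chain : ∀ {h : ℂ → ℂ} {w : ℂ}, AnalyticAt ℂ h (f w) → AnalyticAt ℂ f w →
      HasDerivAt (fun x => h (f x)) (deriv h (f w) * deriv f w) w := fun {h w} hh hw =>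
    HasDerivAt.comp w hh.differentiableAt.hasDerivAt hw.differentiableAt.hasDerivAt
  have near_f := hf.eventually_analyticAt
  have near_g := hf.continuousAt.eventually hg.eventually_analyticAt
  have first : deriv (g ∘ f) =ᶠ[nhds z] fun w => deriv g (f w) * deriv f w := by
    filter_upwards [near_f, near_g] with w hfw hgw
    exact (chain hgw hfw).deriv
  have second : deriv (deriv (g ∘ f)) =ᶠ[nhds z] fun w =>
      deriv (deriv g) (f w) * deriv f w * deriv f w + deriv g (f w) * deriv (deriv f) w := by
    filter_upwards [near_f, near_g, first.eventuallyEq_nhds] with w hfw hgw hw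
    rw [hw.deriv_eq]
    exact ((chain hgw.deriv hfw).mul hfw.deriv.differentiableAt.hasDerivAt).deriv
  have third := second.deriv_eq
  have d1 := hf.deriv.differentiableAt.hasDerivAt
  have d2 := hf.deriv.deriv.differentiableAt.hasDerivAt
  have d3 : HasDerivAt (fun w =>
      deriv (deriv g) (f w) * deriv f w * deriv f w + deriv g (f w) * deriv (deriv f) w) _ z :=
    (((chain hg.deriv.deriv hf).mul d1).mul d1).add ((chain hg.deriv hf).mul d2)
  rw [d3.deriv] at third
  unfold schwarzian
  rw [third, second.eq_of_nhds, first.eq_of_nhds]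
  simp only [Pi.mul_apply]
  field_simp
  ring
end

section
/- Let U ⊆ ℂ be a nonempty open connected set and let f : ℂ → ℂ be complex analytic on a neighborhood of each point of U, with deriv f z ≠ 0 for all z ∈ U and with vanishing Schwarzian derivative: Sf(z) = 0 for all z ∈ U. Then f is the restriction to U of a Möbius transformation: there exist a, b, c, d ∈ ℂ with a·d − b·c ≠ 0 such that for every z ∈ U, c·z + d ≠ 0 and f(z) = (a·z + b)/(c·z + d). -/
lemma exists_const_of_hasDerivAt_zero {U : Set ℂ} (hU : IsOpen U) (hUc : IsConnected U)
    {g : ℂ → ℂ} (hg : ∀ z ∈ U, HasDerivAt g 0 z) : ∃ k, ∀ z ∈ U, g z = k :=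
  hU.exists_is_const_of_deriv_eq_zero hUc.isPreconnected
    (fun z hz => (hg z hz).differentiableAt.differentiableWithinAt)
    (fun z hz => (hg z hz).deriv)

/-- A locally injective holomorphic function on a connected open set whose Schwarzian
derivative vanishes identically is the restriction of a Möbius transformation. -/
theorem mobius_of_schwarzian_eq_zero (U : Set ℂ) (hU : IsOpen U) (hUc : IsConnected U)
    (f : ℂ → ℂ) (hf : AnalyticOnNhd ℂ f U)
    (hf' : ∀ z ∈ U, deriv f z ≠ 0)
    (hS : ∀ z ∈ U, schwarzian f z = 0) :
    ∃ a b c d : ℂ, a * d - b * c ≠ 0 ∧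
      ∀ z ∈ U, c * z + d ≠ 0 ∧ f z = (a * z + b) / (c * z + d) := by
  have hp : ∀ z ∈ U, HasDerivAt f (deriv f z) z :=
    fun z hz => (hf z hz).differentiableAt.hasDerivAt
  have hq : ∀ z ∈ U, HasDerivAt (deriv f) (deriv (deriv f) z) z :=
    fun z hz => (hf z hz).deriv.differentiableAt.hasDerivAt
  have hr : ∀ z ∈ U, HasDerivAt (deriv (deriv f)) (deriv (deriv (deriv f)) z) z :=
    fun z hz => (hf z hz).deriv.deriv.differentiableAt.hasDerivAt
  have hode : ∀ z ∈ U,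
      deriv (deriv (deriv f)) z = (3 / 2) * deriv (deriv f) z ^ 2 / deriv f z := by
    intro z hz
    have h := hS z hz
    have h0 := hf' z hz
    unfold schwarzian at h
    field_simp at h ⊢
    linear_combination h
  clear hS
  -- From here on only the relations between `f` and its derivatives `p`, `q`, `r` matter.
  generalize deriv (deriv (deriv f)) = r at *
  generalize deriv (deriv f) = q at *
  generalize deriv f = p at *
  obtain ⟨K, hK⟩ : ∃ K, ∀ z ∈ U, q z ^ 2 / p z ^ 3 = K := by
    refine exists_const_of_hasDerivAt_zero hU hUc fun z hz => ?_
    have h0 := hf' z hz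
    refine (((hr z hz).fun_pow 2).fun_div ((hq z hz).fun_pow 3) (pow_ne_zero 3 h0)).congr_deriv ?_
    rw [hode z hz]
    field_simp
    push_cast
    ring
  by_cases hK0 : K = 0
  · have hq0 : ∀ z ∈ U, q z = 0 := by
      intro z hz
      have h := hK z hz
      have h0 := hf' z hz
      rw [hK0, div_eq_zero_iff] at h
      simpa [h0] using h
    obtain ⟨a, ha⟩ := exists_const_of_hasDerivAt_zero hU hUc
      fun z hz => (hq z hz).congr_deriv (hq0 z hz)
    obtain ⟨b, hb⟩ : ∃ b, ∀ z ∈ U, f z - a * z = b := by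
      refine exists_const_of_hasDerivAt_zero hU hUc fun z hz => ?_
      refine ((hp z hz).fun_sub ((hasDerivAt_id' z).const_mul a)).congr_deriv ?_
      rw [ha z hz]
      ring
    obtain ⟨z₀, hz₀⟩ := hUc.nonempty
    refine ⟨a, b, 0, 1, ?_, fun z hz => ⟨by simp, ?_⟩⟩
    · have h := hf' z₀ hz₀
      rw [ha z₀ hz₀] at h
      simpa using h
    · rw [← hb z hz]
      simp
  · have hq0 : ∀ z ∈ U, q z ≠ 0 := by
      intro z hz h
      apply hK0
      rw [← hK z hz, h]
      simp
    obtain ⟨β, hβ⟩ : ∃ β, ∀ z ∈ U, z + 2 * (p z / q z) = β := by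
      refine exists_const_of_hasDerivAt_zero hU hUc fun z hz => ?_
      have h0 := hf' z hz
      have h1 := hq0 z hz
      refine ((hasDerivAt_id' z).fun_add
        (((hq z hz).fun_div (hr z hz) h1).const_mul 2)).congr_deriv ?_
      rw [hode z hz]
      field_simp
      ring
    obtain ⟨α, hα⟩ : ∃ α, ∀ z ∈ U, f z - 2 * (p z ^ 2 / q z) = α := by
      refine exists_const_of_hasDerivAt_zero hU hUc fun z hz => ?_
      have h0 := hf' z hz
      have h1 := hq0 z hz
      refine ((hp z hz).fun_sub
        ((((hq z hz).fun_pow 2).fun_div (hr z hz) h1).const_mul 2)).congr_deriv ?_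
      rw [hode z hz]
      field_simp
      push_cast
      ring
    -- The coefficients of `α + (4 / K) / (β - z)`, whose determinant is `4 / K`.
    refine ⟨-α, α * β + 4 / K, -1, β, ?_, fun z hz => ?_⟩
    · have h : -α * β - (α * β + 4 / K) * -1 = 4 / K := by ring
      rw [h]
      exact div_ne_zero (by norm_num) hK0
    · have h0 := hf' z hz
      have h1 := hq0 z hz
      have hz' : -1 * z + β = 2 * (p z / q z) := by
        rw [← hβ z hz]
        ring
      have hne : -1 * z + β ≠ 0 := by
        rw [hz']
        exact mul_ne_zero two_ne_zero (div_ne_zero h0 h1)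
      refine ⟨hne, ?_⟩
      rw [eq_div_iff hne]
      have hk : 4 / K = 4 * p z ^ 3 / q z ^ 2 := by
        rw [← hK z hz]
        field_simp
      have hfz : f z = α + 2 * (p z ^ 2 / q z) := by
        rw [← hα z hz]
        ring
      have hnum : -α * z + (α * β + 4 / K) = α * (-1 * z + β) + 4 / K := by ring
      rw [hnum, hz', hk, hfz]
      field_simp
      ring
end

section
/- Let U ⊆ ℂ be open, let q, u₁, u₂ : ℂ → ℂ be complex analytic on a neighborhood of each point of U, and suppose that on U both u₁ and u₂ satisfy the linear ODE u''(z) = −(q(z)/2)·u(z), and that their Wronskian is identically 1 on U: deriv u₁ z · u₂ z − u₁ z · deriv u₂ z = 1 for all z ∈ U. Then for every z ∈ U with u₂(z) ≠ 0, the quotient f = u₁/u₂ (defined pointwise) satisfies deriv f z ≠ 0 and its Schwarzian derivative equals q: Sf(z) = q(z). -/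
/-- If `u₁`, `u₂` solve `u'' = −(q/2)·u` with Wronskian identically `1`, then the
quotient `f = u₁/u₂` satisfies `Sf = q` wherever `u₂ ≠ 0`. -/
theorem schwarzian_of_ode_solutions (U : Set ℂ) (hU : IsOpen U)
    (q u₁ u₂ : ℂ → ℂ)
    (hq : AnalyticOnNhd ℂ q U) (hu₁ : AnalyticOnNhd ℂ u₁ U) (hu₂ : AnalyticOnNhd ℂ u₂ U)
    (hode₁ : ∀ z ∈ U, deriv (deriv u₁) z = -(q z / 2) * u₁ z)
    (hode₂ : ∀ z ∈ U, deriv (deriv u₂) z = -(q z / 2) * u₂ z)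
    (hW : ∀ z ∈ U, deriv u₁ z * u₂ z - u₁ z * deriv u₂ z = 1) :
    ∀ z ∈ U, u₂ z ≠ 0 →
      deriv (fun w => u₁ w / u₂ w) z ≠ 0 ∧
      schwarzian (fun w => u₁ w / u₂ w) z = q z := by
  intro z hz hz2
  -- Each formula for a derivative of `f` is needed on an open set, so that it can be
  -- differentiated again.
  have hne : ∀ w ∈ U, u₂ w ≠ 0 → ∀ᶠ x in nhds w, x ∈ U ∧ u₂ x ≠ 0 := fun w hw h =>
    (hU.eventually_mem hw).and ((hu₂ w hw).continuousAt.eventually_ne h)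
  have h1 : ∀ w ∈ U, u₂ w ≠ 0 → deriv (fun w => u₁ w / u₂ w) w = 1 / u₂ w ^ 2 := by
    intro w hw h
    have hd := ((hu₁ w hw).differentiableAt.hasDerivAt).fun_div
      ((hu₂ w hw).differentiableAt.hasDerivAt) h
    rw [hd.deriv, hW w hw]
  have h2 : ∀ w ∈ U, u₂ w ≠ 0 →
      deriv (deriv (fun w => u₁ w / u₂ w)) w = -2 * deriv u₂ w / u₂ w ^ 3 := by
    intro w hw h
    have he : deriv (fun w => u₁ w / u₂ w) =ᶠ[nhds w] fun x => 1 / u₂ x ^ 2 :=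
      (hne w hw h).mono fun x hx => h1 x hx.1 hx.2
    have hd := (hasDerivAt_const w (1 : ℂ)).fun_div
      (((hu₂ w hw).differentiableAt.hasDerivAt).fun_pow 2) (pow_ne_zero 2 h)
    rw [he.deriv_eq, hd.deriv]
    field_simp
    norm_num
    ring
  have h3 : deriv (deriv (deriv (fun w => u₁ w / u₂ w))) z =
      q z / u₂ z ^ 2 + 6 * deriv u₂ z ^ 2 / u₂ z ^ 4 := by
    have he : deriv (deriv (fun w => u₁ w / u₂ w)) =ᶠ[nhds z]
        fun x => -2 * deriv u₂ x / u₂ x ^ 3 :=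
      (hne z hz hz2).mono fun x hx => h2 x hx.1 hx.2
    have hd := (((hu₂ z hz).deriv.differentiableAt.hasDerivAt).const_mul (-2 : ℂ)).fun_div
      (((hu₂ z hz).differentiableAt.hasDerivAt).fun_pow 3) (pow_ne_zero 3 hz2)
    rw [he.deriv_eq, hd.deriv, hode₂ z hz]
    field_simp
    norm_num
    ring
  have h1z := h1 z hz hz2
  refine ⟨by rw [h1z]; exact one_div_ne_zero (pow_ne_zero 2 hz2), ?_⟩
  rw [schwarzian, h3, h2 z hz hz2, h1z]
  field_simp
  ring
end

section
/- Let U ⊆ ℂ be a nonempty open set which is simply connected (as a topological subspace), and let q : ℂ → ℂ be complex analytic on a neighborhood of each point of U. Then there exist functions u₁, u₂ : ℂ → ℂ, complex analytic on a neighborhood of each point of U, such that on U both satisfy the linear ODE u''(z) = −(q(z)/2)·u(z), and their Wronskian is identically 1 on U: deriv u₁ z · u₂ z − u₁ z · deriv u₂ z = 1 for all z ∈ U. (Consequently the equation Sf = q for the Schwarzian derivative is solvable by the quotient f = u₁/u₂ on U.) -/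
/-!
Write the equation as `u'' = Q u` with `Q = -q/2`. Near each point a solution with prescribed
`u` and `u'` exists: the power series of `u` is determined by a recursion, and a geometric majorant
(`norm_odeCoeff_le`) shows that it converges (`exists_local_solution`).

The Wronskian of two solutions has derivative zero, hence is constant on connected open sets. So
around each `c ∈ U` there is a disc carrying a basis `u_c, v_c` of solutions with Wronskian `1`,
and the jet `(f, f')` of `f = a u_c + b v_c` determines `(a, b)` through the Wronskians of `f` with
`u_c` and `v_c`. On the intersection of two discs, which is convex, those Wronskians are constant,
so the coordinates with respect to the two bases differ by a constant change of coordinates.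

Such constant transition data define a fibre bundle over `U` with discrete fibre `ℂ × ℂ`, that is,
a covering space. As `U` is simply connected, the identity of `U` lifts through it
(`exists_global_section`), and the first component of the lift is a global solution with any
prescribed jet at a base point (`exists_global_solution`). Solutions with jets `(0, 1)` and
`(1, 0)` have Wronskian `1` at the base point, hence everywhere on the connected set `U`.
-/

open Filter Topology Set

/-- Taylor coefficients `aₙ` of the formal solution of `u'' = Q u` with `a₀ = α` and `a₁ = β`, where
`c` is the sequence of Taylor coefficients of `Q`. -/
noncomputable def odeCoeff (c : ℕ → ℂ) (α β : ℂ) : ℕ → ℂ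
  | 0 => α
  | 1 => β
  | n + 2 => (∑ k : Fin (n + 1), c k * odeCoeff c α β (n - k)) / ((n + 2) * (n + 1))
decreasing_by omega

lemma odeCoeff_add_two (c : ℕ → ℂ) (α β : ℂ) (n : ℕ) :
    odeCoeff c α β (n + 2) =
      (∑ k ∈ Finset.range (n + 1), c k * odeCoeff c α β (n - k)) / ((n + 2) * (n + 1)) := by
  rw [odeCoeff, Finset.sum_range]

/-- A geometric bound on the coefficients of `Q` propagates to the formal solution: the `n + 1` terms
of the convolution are absorbed by the denominator `(n + 2) (n + 1)`. -/
lemma norm_odeCoeff_le {c : ℕ → ℂ} {C R : ℝ} (hC : 0 ≤ C) (hR : 1 ≤ R) (hCR : C ≤ R)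
    (hc : ∀ n, ‖c n‖ ≤ C * R ^ n) (α β : ℂ) (n : ℕ) :
    ‖odeCoeff c α β n‖ ≤ (‖α‖ + ‖β‖) * R ^ n := by
  induction n using Nat.strong_induction_on with
  | _ n ih =>
    match n with
    | 0 => simp [odeCoeff]
    | 1 =>
      simp only [odeCoeff, pow_one]
      nlinarith [norm_nonneg α, norm_nonneg β]
    | n + 2 =>
      set K := ‖α‖ + ‖β‖
      have hK : 0 ≤ K := by positivity
      have hR0 : 0 ≤ R := by linarith
      have hsum : ‖∑ k ∈ Finset.range (n + 1), c k * odeCoeff c α β (n - k)‖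
          ≤ (n + 1) * (C * K * R ^ n) := by
        refine (norm_sum_le_of_le (f := fun k => c k * odeCoeff c α β (n - k))
          (n := fun _ => C * K * R ^ n) (Finset.range (n + 1)) fun k hk => ?_).trans ?_
        · have hk' : k ≤ n := by simpa [Nat.lt_succ_iff] using hk
          rw [norm_mul]
          calc ‖c k‖ * ‖odeCoeff c α β (n - k)‖ ≤ (C * R ^ k) * (K * R ^ (n - k)) := by
                gcongr
                · exact hc k
                · exact ih _ (by omega)
            _ = C * K * (R ^ k * R ^ (n - k)) := by ring
            _ = C * K * R ^ n := by rw [← pow_add, Nat.add_sub_cancel' hk']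
        · simp
      have hden : ‖((n : ℂ) + 2) * (n + 1)‖ = (n + 2) * (n + 1) := by
        have h : ((n : ℂ) + 2) * (n + 1) = (((n + 2) * (n + 1) : ℝ) : ℂ) := by push_cast; ring
        rw [h, Complex.norm_real, Real.norm_of_nonneg (by positivity)]
      rw [odeCoeff_add_two, norm_div, hden, div_le_iff₀ (by positivity)]
      refine hsum.trans ?_
      have h1 : C * K * R ^ n ≤ K * R ^ (n + 2) := by
        have : C ≤ R ^ 2 := by nlinarith
        calc C * K * R ^ n ≤ R ^ 2 * K * R ^ n := by gcongr
          _ = K * R ^ (n + 2) := by ring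
      have h2 : (0:ℝ) ≤ K * R ^ (n + 2) := by positivity
      calc ((n:ℝ) + 1) * (C * K * R ^ n) ≤ (n + 1) * (K * R ^ (n + 2)) := by gcongr
        _ ≤ (K * R ^ (n + 2)) * ((n + 2) * (n + 1)) := by
          have : (0:ℝ) ≤ n := by positivity
          nlinarith [mul_nonneg h2 this, mul_nonneg h2 (mul_nonneg this this)]

/-- Local existence for `u'' = Q u` with prescribed value and derivative at `z₀`. -/
lemma exists_local_solution {Q : ℂ → ℂ} {z₀ : ℂ} (hQ : AnalyticAt ℂ Q z₀) (α β : ℂ) :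
    ∃ u : ℂ → ℂ, AnalyticAt ℂ u z₀ ∧ u z₀ = α ∧ deriv u z₀ = β ∧
      ∀ᶠ z in 𝓝 z₀, deriv (deriv u) z = Q z * u z := by
  have hQs := hQ.hasFPowerSeriesAt
  set c : ℕ → ℂ := fun n => iteratedDeriv n Q z₀ / n.factorial with hc
  obtain ⟨C, r, hC, hr, hb⟩ := FormalMultilinearSeries.le_mul_pow_of_radius_pos _ hQs.radius_pos
  set R : ℝ := max (max r C) 1
  have hrR : r ≤ R := (le_max_left _ _).trans (le_max_left _ _)
  have hCR : C ≤ R := (le_max_right _ _).trans (le_max_left _ _)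
  have h1R : 1 ≤ R := le_max_right _ _
  set a := odeCoeff c α β with ha
  have hbound : ∀ n, ‖a n‖ ≤ (‖α‖ + ‖β‖) * R ^ n := by
    refine norm_odeCoeff_le hC.le h1R hCR (fun n => ?_) α β
    have := hb n
    rw [FormalMultilinearSeries.norm_apply_eq_norm_coef,
      FormalMultilinearSeries.coeff_ofScalars] at this
    exact this.trans (by gcongr)
  set p := FormalMultilinearSeries.ofScalars ℂ a with hp
  have hrad : 0 < p.radius := by
    have hRpos : 0 < R := by linarith
    have : ((R⁻¹.toNNReal : NNReal) : ENNReal) ≤ p.radius := by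
      refine p.le_radius_of_bound (‖α‖ + ‖β‖) fun n => ?_
      rw [FormalMultilinearSeries.norm_apply_eq_norm_coef,
        FormalMultilinearSeries.coeff_ofScalars, Real.coe_toNNReal _ (by positivity), inv_pow,
        ← div_eq_mul_inv, div_le_iff₀ (by positivity)]
      exact hbound n
    refine lt_of_lt_of_le ?_ this
    simpa using hRpos
  have hps := (p.hasFPowerSeriesOnBall hrad).comp_sub z₀
  rw [zero_add] at hps
  set u : ℂ → ℂ := fun z => p.sum (z - z₀)
  have hu : AnalyticAt ℂ u z₀ := hps.analyticAt
  have hcoef : ∀ n, iteratedDeriv n u z₀ = n.factorial * a n := by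
    intro n
    have h := hu.hasFPowerSeriesAt.eq_formalMultilinearSeries hps.hasFPowerSeriesAt
    have h' := congrArg (fun p => FormalMultilinearSeries.coeff p n) h
    simp only [hp, FormalMultilinearSeries.coeff_ofScalars] at h'
    rw [← h']
    field_simp [Nat.factorial_ne_zero]
  refine ⟨u, hu, ?_, ?_, ?_⟩
  · simpa [ha, odeCoeff] using hcoef 0
  · simpa [ha, odeCoeff] using hcoef 1
  -- The defect `u'' - Q u` is analytic, and by the Leibniz rule all its derivatives vanish at `z₀`.
  · set g : ℂ → ℂ := fun z => deriv (deriv u) z - Q z * u z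
    have hg : AnalyticAt ℂ g z₀ := (hu.deriv.deriv).sub (hQ.mul hu)
    have hg0 : ∀ n, iteratedDeriv n g z₀ = 0 := by
      intro n
      have e1 : iteratedDeriv n (deriv (deriv u)) z₀ = iteratedDeriv (n + 2) u z₀ := by
        rw [iteratedDeriv_succ', iteratedDeriv_succ']
      rw [iteratedDeriv_fun_sub hu.deriv.deriv.contDiffAt (hQ.fun_mul hu).contDiffAt, e1, hcoef,
        iteratedDeriv_fun_mul hQ.contDiffAt hu.contDiffAt, ha, odeCoeff_add_two, sub_eq_zero,
        ← ha]
      rw [mul_div_assoc', div_eq_iff (by norm_cast), Finset.mul_sum, Finset.sum_mul]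
      refine Finset.sum_congr rfl fun k hk => ?_
      have hk' : k ≤ n := by simpa [Nat.lt_succ_iff] using hk
      have hQk : iteratedDeriv k Q z₀ = k.factorial * c k := by
        simp only [hc]
        field_simp [Nat.factorial_ne_zero]
      have hch : ((n.choose k : ℂ) * k.factorial * (n - k).factorial) = n.factorial := by
        exact_mod_cast Nat.choose_mul_factorial_mul_factorial hk'
      rw [hQk, hcoef, Nat.factorial_succ, Nat.factorial_succ]
      push_cast
      linear_combination (-(c k * a (n - k) * (n + 2) * (n + 1))) * hch
    have hz := hg.hasFPowerSeriesAt
    simp only [hg0, zero_div] at hz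
    have hz0 := hz.locally_zero_iff.2
      (FormalMultilinearSeries.ofScalars_series_eq_zero_of_scalar_zero ℂ ℂ)
    filter_upwards [hz0] with z hz using sub_eq_zero.1 hz

/-- Gluing over a simply connected base. Here `φ c y v` is the value at `y` of the local section with
parameter `v` in the chart `B c`; if changes of chart act on parameters by constant maps, then there
is a global section through any point which is locally of the form `y ↦ φ x y v`. It is obtained by
lifting the identity to the covering space with discrete fibre `F` that the charts define. -/
lemma exists_global_section {X F : Type*} [TopologicalSpace X] [SimplyConnectedSpace X]
    [LocallyPathConnectedSpace X] (B : X → Set X) (hBo : ∀ c, IsOpen (B c))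
    (hB : ∀ c, c ∈ B c) (φ : X → X → Equiv.Perm F)
    (hφ : ∀ c d, ∀ x ∈ B c ∩ B d, ∀ y ∈ B c ∩ B d, ∀ v,
      (φ d x).symm (φ c x v) = (φ d y).symm (φ c y v)) (x₀ : X) (w : F) :
    ∃ s : X → F, s x₀ = w ∧ ∀ x, ∃ v, ∀ᶠ y in 𝓝 x, s y = φ x y v := by
  let _ : TopologicalSpace F := ⊥
  have : DiscreteTopology F := ⟨rfl⟩
  let Z : FiberBundleCore X X F :=
    { baseSet := B
      isOpen_baseSet := hBo
      indexAt := id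
      mem_baseSet_at := hB
      coordChange := fun c d x v => (φ d x).symm (φ c x v)
      coordChange_self := by simp
      continuousOn_coordChange := by
        rintro c d ⟨x, v⟩ ⟨hx, -⟩
        refine ContinuousAt.continuousWithinAt ?_
        refine (continuousAt_const (y := (φ d x).symm (φ c x v))).congr ?_
        have hU : (B c ∩ B d) ×ˢ {v} ∈ 𝓝 (x, v) :=
          prod_mem_nhds (((hBo c).inter (hBo d)).mem_nhds hx) (by simp)
        filter_upwards [hU]
        rintro ⟨y, v'⟩ ⟨hy, hv'⟩
        obtain rfl : v' = v := hv'
        exact hφ c d x hx y hy v'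
      coordChange_comp := by simp }
  have hcov : IsCoveringMap (Bundle.TotalSpace.proj : Z.TotalSpace → X) :=
    FiberBundle.isCoveringMap
  let e₀ : Z.TotalSpace := ⟨x₀, (φ x₀ x₀).symm w⟩
  obtain ⟨S, ⟨hS0, hS⟩, -⟩ := hcov.existsUnique_continuousMap_lifts (ContinuousMap.id X) x₀ e₀ rfl
  have hproj : ∀ x, (S x).proj = x := fun x => congrFun hS x
  -- The fibre coordinate of `e` is a parameter in the chart indexed by `e.proj`; `σ` turns it into
  -- the value of the section.
  let σ : Z.TotalSpace → F := fun e => φ e.proj e.proj e.snd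
  refine ⟨fun x => σ (S x), ?_, fun x => ?_⟩
  · simp only [hS0, σ, e₀]
    exact (φ x₀ x₀).apply_symm_apply w
  · let t := Z.localTriv x
    have hcont : ContinuousAt (fun y => (t (S y)).2) x := by
      have hmem : S x ∈ t.source := by
        rw [t.mem_source]
        change (S x).proj ∈ B x
        rw [hproj]
        exact hB x
      have h1 : ContinuousAt t (S x) := t.continuousAt hmem
      exact continuous_snd.continuousAt.comp (h1.comp S.continuous.continuousAt)
    refine ⟨(t (S x)).2, ?_⟩
    have hev : ∀ᶠ y in 𝓝 x, (t (S y)).2 = (t (S x)).2 :=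
      hcont.eventually (by simp : {(t (S x)).2} ∈ 𝓝 (t (S x)).2)
    filter_upwards [hev] with y hy
    have hσ : ∀ e : Z.TotalSpace, σ e = φ x e.proj (t e).2 := fun e =>
      ((φ x e.proj).apply_symm_apply _).symm
    change σ (S y) = _
    rw [hσ, hy, hproj]

/-- `u` is analytic at every point of `S` and solves `u'' = Q u` there. -/
def IsSolutionOn (Q : ℂ → ℂ) (S : Set ℂ) (u : ℂ → ℂ) : Prop :=
  AnalyticOnNhd ℂ u S ∧ ∀ z ∈ S, deriv (deriv u) z = Q z * u z

lemma IsSolutionOn.mono {Q u : ℂ → ℂ} {S T : Set ℂ} (h : IsSolutionOn Q T u) (hST : S ⊆ T) :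
    IsSolutionOn Q S u :=
  ⟨h.1.mono hST, fun z hz => h.2 z (hST hz)⟩

lemma deriv_lin {u v : ℂ → ℂ} {z : ℂ} (hu : DifferentiableAt ℂ u z) (hv : DifferentiableAt ℂ v z)
    (a b : ℂ) : deriv (fun z => a * u z + b * v z) z = a * deriv u z + b * deriv v z :=
  ((hu.hasDerivAt.const_mul a).add (hv.hasDerivAt.const_mul b)).deriv

lemma IsSolutionOn.lin {Q u v : ℂ → ℂ} {S : Set ℂ} (hS : IsOpen S) (hu : IsSolutionOn Q S u)
    (hv : IsSolutionOn Q S v) (a b : ℂ) : IsSolutionOn Q S (fun z => a * u z + b * v z) := by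
  refine ⟨fun z hz => (analyticAt_const.mul (hu.1 z hz)).add (analyticAt_const.mul (hv.1 z hz)),
    fun z hz => ?_⟩
  have h1 : deriv (fun z => a * u z + b * v z) =ᶠ[𝓝 z]
      fun z => a * deriv u z + b * deriv v z := by
    filter_upwards [hS.mem_nhds hz] with w hw
    exact deriv_lin (hu.1 w hw).differentiableAt (hv.1 w hw).differentiableAt a b
  rw [h1.deriv_eq, deriv_lin (hu.1 z hz).deriv.differentiableAt (hv.1 z hz).deriv.differentiableAt,
    hu.2 z hz, hv.2 z hz]
  ring

lemma IsSolutionOn.wronskian_const {Q u v : ℂ → ℂ} {S : Set ℂ} (hS : IsOpen S)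
    (hSc : IsPreconnected S) (hu : IsSolutionOn Q S u) (hv : IsSolutionOn Q S v) {x y : ℂ}
    (hx : x ∈ S) (hy : y ∈ S) :
    deriv u x * v x - u x * deriv v x = deriv u y * v y - u y * deriv v y := by
  have hd : ∀ z ∈ S, HasDerivAt (fun z => deriv u z * v z - u z * deriv v z) 0 z := by
    intro z hz
    have hu1 := (hu.1 z hz).differentiableAt.hasDerivAt
    have hv1 := (hv.1 z hz).differentiableAt.hasDerivAt
    have hu2 := (hu.1 z hz).deriv.differentiableAt.hasDerivAt
    have hv2 := (hv.1 z hz).deriv.differentiableAt.hasDerivAt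
    refine ((hu2.mul hv1).sub (hu1.mul hv2)).congr_deriv ?_
    rw [hu.2 z hz, hv.2 z hz]
    ring
  exact hS.is_const_of_deriv_eq_zero hSc
    (fun z hz => (hd z hz).differentiableAt.differentiableWithinAt)
    (fun z hz => (hd z hz).deriv) hx hy

/-- A pair of solutions on a disc around `c` with Wronskian identically `1`. -/
lemma exists_local_basis {Q : ℂ → ℂ} {U : Set ℂ} (hQ : AnalyticOnNhd ℂ Q U) {c : ℂ} (hc : c ∈ U) :
    ∃ r > 0, ∃ u v : ℂ → ℂ, IsSolutionOn Q (Metric.ball c r) u ∧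
      IsSolutionOn Q (Metric.ball c r) v ∧
      ∀ z ∈ Metric.ball c r, deriv u z * v z - u z * deriv v z = 1 := by
  obtain ⟨u, hu, hu0, hu1, hu2⟩ := exists_local_solution (hQ c hc) 0 1
  obtain ⟨v, hv, hv0, hv1, hv2⟩ := exists_local_solution (hQ c hc) 1 0
  obtain ⟨r, hr, h⟩ := Metric.eventually_nhds_iff_ball.1
    (((hu.eventually_analyticAt.and hu2).and (hv.eventually_analyticAt.and hv2)))
  have hus : IsSolutionOn Q (Metric.ball c r) u :=
    ⟨fun z hz => (h z hz).1.1, fun z hz => (h z hz).1.2⟩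
  have hvs : IsSolutionOn Q (Metric.ball c r) v :=
    ⟨fun z hz => (h z hz).2.1, fun z hz => (h z hz).2.2⟩
  refine ⟨r, hr, u, v, hus, hvs, fun z hz => ?_⟩
  rw [hus.wronskian_const Metric.isOpen_ball (convex_ball c r).isPreconnected hvs hz
    (Metric.mem_ball_self hr), hu0, hu1, hv0, hv1]
  norm_num

open Classical in
/-- The map sending coordinates `(a, b)` to the jet `(f, f')` of `f = a u + b v`, where `u, v, u', v'`
are the values of a pair of functions and of their derivatives at a point. The inverse exists
because the Wronskian `u' v - u v'` is `1`; otherwise the identity is used as a junk value. -/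
noncomputable def jetPerm (u v u' v' : ℂ) : Equiv.Perm (ℂ × ℂ) :=
  if h : u' * v - u * v' = 1 then
    { toFun := fun p => (p.1 * u + p.2 * v, p.1 * u' + p.2 * v')
      invFun := fun p => (p.2 * v - p.1 * v', p.1 * u' - p.2 * u)
      left_inv := fun p => by
        ext
        · linear_combination p.1 * h
        · linear_combination p.2 * h
      right_inv := fun p => by
        ext
        · linear_combination p.1 * h
        · linear_combination p.2 * h }
  else 1

lemma jetPerm_apply {u v u' v' : ℂ} (h : u' * v - u * v' = 1) (p : ℂ × ℂ) :
    jetPerm u v u' v' p = (p.1 * u + p.2 * v, p.1 * u' + p.2 * v') := by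
  rw [jetPerm, dif_pos h]
  rfl

lemma jetPerm_symm_apply {u v u' v' : ℂ} (h : u' * v - u * v' = 1) (p : ℂ × ℂ) :
    (jetPerm u v u' v').symm p = (p.2 * v - p.1 * v', p.1 * u' - p.2 * u) := by
  rw [jetPerm, dif_pos h]
  rfl

/-- Global existence on a simply connected open set, with prescribed value and derivative at `z₀`. -/
lemma exists_global_solution {U : Set ℂ} (hU : IsOpen U) (hsc : SimplyConnectedSpace U)
    {Q : ℂ → ℂ} (hQ : AnalyticOnNhd ℂ Q U) {z₀ : ℂ} (hz₀ : z₀ ∈ U) (α β : ℂ) :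
    ∃ u : ℂ → ℂ, IsSolutionOn Q U u ∧ u z₀ = α ∧ deriv u z₀ = β := by
  classical
  have := hU.locallyPathConnectedSpace
  choose r hr u v hu hv hW using fun c : U => exists_local_basis hQ c.2
  obtain ⟨s, hs0, hs⟩ := exists_global_section (X := U) (F := ℂ × ℂ)
    (fun c => Subtype.val ⁻¹' Metric.ball (c : ℂ) (r c))
    (fun c => Metric.isOpen_ball.preimage continuous_subtype_val)
    (fun c => Metric.mem_ball_self (hr c))
    (fun c x => jetPerm (u c x) (v c x) (deriv (u c) x) (deriv (v c) x))
    (by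
      -- The coordinates of a solution `f` in the basis at `d` are Wronskians of `f` with that
      -- basis, hence constant on the convex intersection of the two discs.
      rintro c d x ⟨hxc, hxd⟩ y ⟨hyc, hyd⟩ ⟨a, b⟩
      rw [jetPerm_apply (hW c x hxc), jetPerm_apply (hW c y hyc),
        jetPerm_symm_apply (hW d x hxd), jetPerm_symm_apply (hW d y hyd)]
      set B := Metric.ball (c : ℂ) (r c)
      set D := Metric.ball (d : ℂ) (r d)
      have hBD : IsOpen (B ∩ D) := Metric.isOpen_ball.inter Metric.isOpen_ball
      have hBDc : IsPreconnected (B ∩ D) :=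
        ((convex_ball _ _).inter (convex_ball _ _)).isPreconnected
      have hf := ((hu c).lin Metric.isOpen_ball (hv c) a b).mono (inter_subset_left : B ∩ D ⊆ B)
      have h1 := hf.wronskian_const hBD hBDc ((hv d).mono inter_subset_right)
        ⟨hxc, hxd⟩ ⟨hyc, hyd⟩
      have h2 := hf.wronskian_const hBD hBDc ((hu d).mono inter_subset_right)
        ⟨hxc, hxd⟩ ⟨hyc, hyd⟩
      rw [deriv_lin (hu c |>.1 x hxc).differentiableAt (hv c |>.1 x hxc).differentiableAt,
        deriv_lin (hu c |>.1 y hyc).differentiableAt (hv c |>.1 y hyc).differentiableAt] at h1 h2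
      ext
      · exact h1
      · linear_combination -h2)
    ⟨z₀, hz₀⟩ (α, β)
  let w : ℂ → ℂ := fun z => if h : z ∈ U then (s ⟨z, h⟩).1 else 0
  have key : ∀ x : U, ∃ f : ℂ → ℂ, IsSolutionOn Q (Metric.ball (x : ℂ) (r x)) f ∧
      w =ᶠ[𝓝 (x : ℂ)] f ∧ s x = (f x, deriv f x) := by
    intro x
    obtain ⟨⟨a, b⟩, hab⟩ := hs x
    have hxx : (x : ℂ) ∈ Metric.ball (x : ℂ) (r x) := Metric.mem_ball_self (hr x)
    refine ⟨fun z => a * u x z + b * v x z, (hu x).lin Metric.isOpen_ball (hv x) a b, ?_, ?_⟩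
    · rw [nhds_subtype_eq_comap, eventually_comap] at hab
      filter_upwards [hab, hU.mem_nhds x.2, Metric.ball_mem_nhds (x : ℂ) (hr x)] with z hz hzU hzB
      simp only [w, dif_pos hzU]
      rw [hz ⟨z, hzU⟩ rfl, jetPerm_apply (hW x z hzB)]
    · rw [hab.self_of_nhds, jetPerm_apply (hW x x hxx),
        deriv_lin ((hu x).1 x hxx).differentiableAt ((hv x).1 x hxx).differentiableAt]
  refine ⟨w, ⟨fun z hz => ?_, fun z hz => ?_⟩, ?_, ?_⟩
  · obtain ⟨f, hf, hwf, -⟩ := key ⟨z, hz⟩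
    exact (hf.1 z (Metric.mem_ball_self (hr _))).congr hwf.symm
  · obtain ⟨f, hf, hwf, -⟩ := key ⟨z, hz⟩
    rw [hwf.deriv.deriv_eq, hwf.eq_of_nhds]
    exact hf.2 z (Metric.mem_ball_self (hr _))
  · simp [w, hz₀, hs0]
  · obtain ⟨f, hf, hwf, hsf⟩ := key ⟨z₀, hz₀⟩
    rw [hwf.deriv_eq]
    rw [hs0] at hsf
    exact (congrArg Prod.snd hsf).symm

/-- On a nonempty simply connected open set, the ODE `u'' = −(q/2)·u` admits two
holomorphic solutions with Wronskian identically `1` (so `Sf = q` is solvable by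
`f = u₁/u₂`). -/
theorem exists_ode_solutions (U : Set ℂ) (hne : U.Nonempty) (hU : IsOpen U)
    (hsc : SimplyConnectedSpace U)
    (q : ℂ → ℂ) (hq : AnalyticOnNhd ℂ q U) :
    ∃ u₁ u₂ : ℂ → ℂ,
      AnalyticOnNhd ℂ u₁ U ∧ AnalyticOnNhd ℂ u₂ U ∧
      (∀ z ∈ U, deriv (deriv u₁) z = -(q z / 2) * u₁ z) ∧
      (∀ z ∈ U, deriv (deriv u₂) z = -(q z / 2) * u₂ z) ∧
      (∀ z ∈ U, deriv u₁ z * u₂ z - u₁ z * deriv u₂ z = 1) := by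
  obtain ⟨z₀, hz₀⟩ := hne
  have hQ : AnalyticOnNhd ℂ (fun z => -(q z / 2)) U := fun z hz => (hq z hz).div_const.neg
  obtain ⟨u₁, h₁, h₁0, h₁1⟩ := exists_global_solution hU hsc hQ hz₀ 0 1
  obtain ⟨u₂, h₂, h₂0, h₂1⟩ := exists_global_solution hU hsc hQ hz₀ 1 0
  have hUc : IsPreconnected U := isPreconnected_iff_preconnectedSpace.2 inferInstance
  refine ⟨u₁, u₂, h₁.1, h₂.1, h₁.2, h₂.2, fun z hz => ?_⟩
  rw [h₁.wronskian_const hU hUc h₂ hz hz₀, h₁0, h₁1, h₂0, h₂1]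
  norm_num
end

section
/- Let n : ℕ, let U ⊆ (Fin n → ℂ) be an open preconnected set, and let f : (Fin n → ℂ) → ℂ be complex analytic on a neighborhood of each point of U. Suppose there exists a point z₀ ∈ U all of whose coordinates are real (i.e. (z₀ k).im = 0 for every k), and that f vanishes at every point of U with all real coordinates: for every z ∈ U with (z k).im = 0 for all k, f(z) = 0. Then f vanishes identically on U. (A holomorphic function vanishing on the maximal totally real slice ℝⁿ ⊆ ℂⁿ vanishes everywhere.) -/
/-!
Choose a polydisc inside `U` centred at the given real point. On it, the real coordinates are
freed one at a time: with the other coordinates fixed, `f` is a holomorphic function of one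
variable on a disc with real centre which vanishes at the real points of that disc, so it vanishes
on the disc by the one-variable identity theorem (`eq_zero_on_polydisc`). Hence `f` vanishes near
the real point, and the identity theorem on the preconnected set `U` concludes.
-/

/-- A one-variable function analytic on a disc with real centre and vanishing at the real points
of the disc vanishes on the disc: the real points accumulate at the centre. -/
lemma eq_zero_on_disc {g : ℂ → ℂ} {c : ℂ} {r : ℝ} (hr : 0 < r) (hc : c.im = 0)
    (hg : AnalyticOnNhd ℂ g (Metric.ball c r))
    (h0 : ∀ w ∈ Metric.ball c r, w.im = 0 → g w = 0) :
    ∀ w ∈ Metric.ball c r, g w = 0 := by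
  have hlim : Filter.Tendsto (fun t : ℝ => c + (t : ℂ)) (nhdsWithin 0 {0}ᶜ)
      (nhdsWithin c {c}ᶜ) := by
    apply tendsto_nhdsWithin_of_tendsto_nhds_of_eventually_within
    · have h : Continuous (fun t : ℝ => c + (t : ℂ)) := by fun_prop
      exact (h.tendsto' 0 c (by simp)).mono_left nhdsWithin_le_nhds
    · filter_upwards [self_mem_nhdsWithin] with t ht
      simpa using ht
  have hfreq : ∃ᶠ w in nhdsWithin c {c}ᶜ, g w = 0 := by
    refine hlim.frequently (Filter.Eventually.frequently ?_)
    filter_upwards [hlim (mem_nhdsWithin_of_mem_nhds (Metric.ball_mem_nhds c hr))] with t ht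
    exact h0 _ ht (by simp [hc])
  exact hg.eqOn_zero_of_preconnected_of_frequently_eq_zero
    (convex_ball c r).isPreconnected (Metric.mem_ball_self hr) hfreq

/-- Vanishing at the real points of a polydisc with real centre propagates to the points whose
coordinates outside `S` are real, by induction on `S`. Balls of `Fin n → ℂ` are polydiscs because
of the sup norm. -/
lemma eq_zero_on_polydisc {n : ℕ} {f : (Fin n → ℂ) → ℂ} {c : Fin n → ℂ} {r : ℝ} (hr : 0 < r)
    (hc : ∀ k, (c k).im = 0) (hf : AnalyticOnNhd ℂ f (Metric.ball c r))
    (h0 : ∀ z ∈ Metric.ball c r, (∀ k, (z k).im = 0) → f z = 0) (S : Finset (Fin n)) :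
    ∀ z ∈ Metric.ball c r, (∀ k ∉ S, (z k).im = 0) → f z = 0 := by
  induction S using Finset.induction_on with
  | empty => simpa using h0
  | insert j S _ ih =>
    intro z hz hzS
    have hmem : ∀ w ∈ Metric.ball (c j) r, Function.update z j w ∈ Metric.ball c r := by
      intro w hw
      rw [Metric.mem_ball, dist_pi_lt_iff hr] at hz ⊢
      intro k
      by_cases hk : k = j
      · subst hk
        simpa using hw
      · simpa [hk] using hz k
    have hupd : Differentiable ℂ (Function.update z j) :=
      fun w => (hasFDerivAt_update z w).differentiableAt
    have hg : AnalyticOnNhd ℂ (fun w => f (Function.update z j w)) (Metric.ball (c j) r) :=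
      fun w hw => (hf _ (hmem w hw)).comp (f := Function.update z j) (hupd.analyticAt w)
    have hslice := eq_zero_on_disc hr (hc j) hg (fun w hw hwim => ih _ (hmem w hw) (by
      intro k hk
      by_cases hkj : k = j
      · subst hkj
        simpa using hwim
      · simpa [hkj] using hzS k (by simp [hkj, hk])))
    simpa using hslice (z j) (by
      rw [Metric.mem_ball, dist_pi_lt_iff hr] at hz
      exact hz j)


/-- A holomorphic function on an open preconnected subset of `ℂⁿ` that vanishes on the
maximal totally real slice `ℝⁿ ⊆ ℂⁿ` (assumed to meet the set) vanishes identically. -/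
theorem eq_zero_of_eq_zero_on_real_slice (n : ℕ) (U : Set (Fin n → ℂ))
    (hU : IsOpen U) (hUc : IsPreconnected U)
    (f : (Fin n → ℂ) → ℂ) (hf : AnalyticOnNhd ℂ f U)
    (hreal : ∃ z₀ ∈ U, ∀ k, (z₀ k).im = 0)
    (hvanish : ∀ z ∈ U, (∀ k, (z k).im = 0) → f z = 0) :
    ∀ z ∈ U, f z = 0 := by
  obtain ⟨c, hcU, hc⟩ := hreal
  obtain ⟨r, hr, hball⟩ := Metric.isOpen_iff.mp hU c hcU
  have hzero : ∀ z ∈ Metric.ball c r, f z = 0 := fun z hz =>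
    eq_zero_on_polydisc hr hc (hf.mono hball) (fun w hw => hvanish w (hball hw))
      Finset.univ z hz (by simp)
  exact hf.eqOn_zero_of_preconnected_of_eventuallyEq_zero hUc hcU
    (Filter.mem_of_superset (Metric.ball_mem_nhds c hr) hzero)
end
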